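/- arXiv:2301.03889 — 2 statements merged into one kernel-verified Lean document; each statement's English description precedes it below -/
import Mathlib

section
/- Unforgeable polynomials (Theorem 6, counting form): Let p be a prime, F = ZMod p, and fix d, D ∈ ℕ and π ∈ F[X] with natDegree π ≤ d. Consider the finite sample space Ω of tuples (a, b, w, g) with a ∈ F \ {0}, b ∈ F, w ∈ F^{d+1}, g ∈ F^{2d+2}; for such a tuple set ζ = a·X + b, ω = Σ_{i=0}^{d} w_i·X^i, γ = Σ_{i=0}^{2d+1} g_i·X^i, and θ = ζ·ω·π + γ. Let A : F[X] → F[X] be an arbitrary function (the adversary, which sees only θ and the public π) with natDegree (A f) ≤ D for every f. Then p · #{(a, b, w, g) ∈ Ω : A(θ) ≠ θ and ζ divides A(θ) − γ} ≤ max(D, 2d+1) · #Ω; equivalently, when (ζ, ω, γ) are sampled uniformly as above, the probability that the adversary's forged polynomial δ = A(θ) satisfies δ ≠ θ and ζ ∣ (δ − γ) is at most max(D, 2d+1)/p. -/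
/-!
Because `ζ` divides `θ - γ = ζ * ω * π`, the event `ζ ∣ A θ - γ` is the same as `ζ ∣ A θ - θ`, i.e.
the root `-b / a` of `ζ` is a root of `A θ - θ`. As `deg (ζ * ω * π) ≤ 2d + 1`, the uniform mask `γ`
makes `θ` independent of `(a, b, w)`: for fixed `a, b, w` the polynomial `θ` determines `γ`. Hence,
once `(a, w, θ)` is fixed, a winning tuple is determined by `-b / a`, which must lie among the at
most `max D (2d + 1)` roots of the fixed nonzero polynomial `A θ - θ`. Comparing with the `p`
possible values of `b` for each `(a, w, θ)` gives the bound.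
-/

open Polynomial

/-- The polynomial `∑ vᵢ Xⁱ` of degree `< n` with coefficient vector `v`. -/
noncomputable def vecPoly {p n : ℕ} (v : Fin n → ZMod p) : (ZMod p)[X] :=
  ∑ i, C (v i) * X ^ (i : ℕ)

lemma vecPoly_coeff {p n : ℕ} (v : Fin n → ZMod p) (i : Fin n) :
    (vecPoly v).coeff i = v i := by
  simp [vecPoly, coeff_X_pow, Fin.val_inj]

lemma vecPoly_injective {p n : ℕ} :
    Function.Injective (vecPoly : (Fin n → ZMod p) → (ZMod p)[X]) := by
  intro v w h
  funext i
  rw [← vecPoly_coeff v i, h, vecPoly_coeff]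

lemma vecPoly_natDegree_le {p n : ℕ} (v : Fin (n + 1) → ZMod p) :
    (vecPoly v).natDegree ≤ n := by
  refine natDegree_sum_le_of_forall_le _ _ fun i _ => ?_
  exact (natDegree_C_mul_X_pow_le _ _).trans (by omega)

/-- The published polynomial `θ = ζ * ω * π + γ` of a sample `(a, b, w, g)`. -/
noncomputable def published {p d : ℕ} (π : (ZMod p)[X])
    (x : ZMod p × ZMod p × (Fin (d + 1) → ZMod p) × (Fin (2 * d + 2) → ZMod p)) : (ZMod p)[X] :=
  (C x.1 * X + C x.2.1) * vecPoly x.2.2.1 * π + vecPoly x.2.2.2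

lemma published_natDegree_le {p d : ℕ} (π : (ZMod p)[X]) (hπ : π.natDegree ≤ d)
    (x : ZMod p × ZMod p × (Fin (d + 1) → ZMod p) × (Fin (2 * d + 2) → ZMod p)) :
    (published π x).natDegree ≤ 2 * d + 1 := by
  refine natDegree_add_le_of_degree_le ?_ (vecPoly_natDegree_le _)
  have h1 := natDegree_linear_le (a := x.1) (b := x.2.1)
  have h2 := vecPoly_natDegree_le x.2.2.1
  exact (natDegree_mul_le_of_le (natDegree_mul_le_of_le h1 h2) hπ).trans (by omega)

/-- The data `(a, w, θ)` of a sample, with `θ` recorded by its first `2d + 2` coefficients. -/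
noncomputable def view {p d : ℕ} (π : (ZMod p)[X])
    (x : ZMod p × ZMod p × (Fin (d + 1) → ZMod p) × (Fin (2 * d + 2) → ZMod p)) :
    ZMod p × (Fin (d + 1) → ZMod p) × (Fin (2 * d + 2) → ZMod p) :=
  (x.1, x.2.2.1, fun i => (published π x).coeff i)

lemma published_eq_of_view_eq {p d : ℕ} {π : (ZMod p)[X]} (hπ : π.natDegree ≤ d)
    {x y : ZMod p × ZMod p × (Fin (d + 1) → ZMod p) × (Fin (2 * d + 2) → ZMod p)}
    (h : view π x = view π y) : published π x = published π y := by
  ext i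
  by_cases hi : i < 2 * d + 2
  · exact congrFun (congrArg (fun v => v.2.2) h) ⟨i, hi⟩
  · rw [coeff_eq_zero_of_natDegree_lt, coeff_eq_zero_of_natDegree_lt]
    · exact (published_natDegree_le π hπ y).trans_lt (by omega)
    · exact (published_natDegree_le π hπ x).trans_lt (by omega)

/-- If `ζ ∣ δ - γ`, then the root `-b / a` of `ζ` is a root of `δ - θ`. -/
lemma isRoot_of_dvd {p d : ℕ} [Fact p.Prime] (π δ : (ZMod p)[X])
    (x : ZMod p × ZMod p × (Fin (d + 1) → ZMod p) × (Fin (2 * d + 2) → ZMod p)) (ha : x.1 ≠ 0)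
    (h : (C x.1 * X + C x.2.1) ∣ δ - vecPoly x.2.2.2) :
    (δ - published π x).IsRoot (-x.2.1 / x.1) := by
  have h' : (C x.1 * X + C x.2.1) ∣ δ - published π x := by
    have : δ - published π x = (δ - vecPoly x.2.2.2) -
        (C x.1 * X + C x.2.1) * (vecPoly x.2.2.1 * π) := by
      unfold published; ring
    rw [this]
    exact dvd_sub h (dvd_mul_right _ _)
  refine IsRoot.dvd ?_ h'
  simp only [IsRoot, eval_add, eval_mul, eval_C, eval_X]
  field_simp
  ring

/-- Unforgeable polynomials (counting form): over `F = ZMod p` (`p` prime), fix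
`d, D` and a public polynomial `π` of degree ≤ `d`.  Sample uniformly a tuple
`(a, b, w, g)` with `a ≠ 0`, set `ζ = a·X + b`, `ω = ∑ wᵢ·Xⁱ` (degree ≤ d),
`γ = ∑ gᵢ·Xⁱ` (degree ≤ 2d+1) and `θ = ζ·ω·π + γ`.  Then for any adversary
`A : F[X] → F[X]` producing outputs of degree ≤ `D`, the proportion of tuples
for which `A θ ≠ θ` yet `ζ ∣ (A θ - γ)` is at most `max D (2d+1) / p`. -/
theorem unforgeable_polynomial (p : ℕ) [Fact p.Prime] (d D : ℕ)
    (π : Polynomial (ZMod p)) (hπ : π.natDegree ≤ d)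
    (A : Polynomial (ZMod p) → Polynomial (ZMod p))
    (hA : ∀ f, (A f).natDegree ≤ D) :
    p * Set.ncard
        {x : ZMod p × ZMod p × (Fin (d + 1) → ZMod p) × (Fin (2 * d + 2) → ZMod p) |
          x.1 ≠ 0 ∧
          (let ζ : Polynomial (ZMod p) := Polynomial.C x.1 * Polynomial.X + Polynomial.C x.2.1
           let ω : Polynomial (ZMod p) := ∑ i, Polynomial.C (x.2.2.1 i) * Polynomial.X ^ (i : ℕ)
           let γ : Polynomial (ZMod p) := ∑ i, Polynomial.C (x.2.2.2 i) * Polynomial.X ^ (i : ℕ)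
           let θ : Polynomial (ZMod p) := ζ * ω * π + γ
           A θ ≠ θ ∧ ζ ∣ (A θ - γ))}
      ≤ max D (2 * d + 1) * Set.ncard
        {x : ZMod p × ZMod p × (Fin (d + 1) → ZMod p) × (Fin (2 * d + 2) → ZMod p) |
          x.1 ≠ 0} := by
  classical
  set M := max D (2 * d + 1)
  let T : Finset (ZMod p × (Fin (d + 1) → ZMod p) × (Fin (2 * d + 2) → ZMod p)) :=
    {v | v.1 ≠ 0}
  let S : Finset (ZMod p × ZMod p × (Fin (d + 1) → ZMod p) × (Fin (2 * d + 2) → ZMod p)) :=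
    {x | x.1 ≠ 0 ∧ A (published π x) ≠ published π x ∧
      (C x.1 * X + C x.2.1) ∣ A (published π x) - vecPoly x.2.2.2}
  have hΩ : Set.ncard {x : ZMod p × ZMod p × (Fin (d + 1) → ZMod p) ×
      (Fin (2 * d + 2) → ZMod p) | x.1 ≠ 0} = p * T.card := by
    have himg : {x : ZMod p × ZMod p × (Fin (d + 1) → ZMod p) × (Fin (2 * d + 2) → ZMod p) |
        x.1 ≠ 0} = (((Finset.univ : Finset (ZMod p)) ×ˢ T).image
          fun q => (q.2.1, q.1, q.2.2)) := by
      ext ⟨a, b, w, g⟩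
      simp [T]
    rw [himg, Set.ncard_coe_finset, Finset.card_image_of_injective, Finset.card_product,
      Finset.card_univ, ZMod.card]
    rintro ⟨b, a, w⟩ ⟨b', a', w'⟩ h
    simp only [Prod.mk.injEq] at h ⊢
    tauto
  have hS : S.card ≤ M * T.card := by
    refine Finset.card_le_mul_card_image_of_maps_to (f := view π) ?_ M ?_
    · intro x hx
      exact Finset.mem_filter.2 ⟨Finset.mem_univ _, (Finset.mem_filter.1 hx).2.1⟩
    · intro v _
      rcases Finset.eq_empty_or_nonempty {x ∈ S | view π x = v} with he | ⟨y, hy⟩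
      · rw [he]; exact Nat.zero_le _
      obtain ⟨hyS, rfl⟩ := Finset.mem_filter.1 hy
      -- every sample in the fibre shares the polynomial `θ` of `y`
      set q := A (published π y) - published π y
      have hq0 : q ≠ 0 := sub_ne_zero.2 (Finset.mem_filter.1 hyS).2.2.1
      have hqd : q.natDegree ≤ M := (natDegree_sub_le _ _).trans
        (max_le_max (hA _) (published_natDegree_le π hπ y))
      calc _ ≤ q.roots.toFinset.card := by
            refine Finset.card_le_card_of_injOn (fun x => -x.2.1 / x.1) ?_ ?_
            · intro x hx
              obtain ⟨hxS, hxy⟩ := Finset.mem_filter.1 hx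
              obtain ⟨-, ha, -, hdvd⟩ := Finset.mem_filter.1 hxS
              have hr := isRoot_of_dvd π _ x ha hdvd
              rw [published_eq_of_view_eq hπ hxy] at hr
              exact Finset.mem_coe.2 (Multiset.mem_toFinset.2 ((mem_roots hq0).2 hr))
            · intro x hx z hz hxz
              obtain ⟨hxS, hxy⟩ := Finset.mem_filter.1 hx
              obtain ⟨-, hzy⟩ := Finset.mem_filter.1 hz
              have ha := (Finset.mem_filter.1 hxS).2.1
              have hv := hxy.trans hzy.symm
              have hθ := published_eq_of_view_eq hπ hv
              obtain ⟨a, b, w, g⟩ := x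
              obtain ⟨a', b', w', g'⟩ := z
              obtain rfl : a = a' := congrArg (fun v => v.1) hv
              obtain rfl : w = w' := congrArg (fun v => v.2.1) hv
              obtain rfl : b = b' := by
                have := (div_left_inj' ha).1 hxz
                exact neg_injective this
              obtain rfl : g = g' := vecPoly_injective (add_left_cancel hθ)
              rfl
        _ ≤ q.roots.card := Multiset.toFinset_card_le _
        _ ≤ q.natDegree := card_roots' q
        _ ≤ M := hqd
  rw [hΩ]
  calc _ = p * S.card := by
        rw [← Set.ncard_coe_finset]
        congr 2
        ext x
        rw [Finset.mem_coe, Finset.mem_filter_univ]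
        rfl
    _ ≤ p * (M * T.card) := Nat.mul_le_mul_left _ hS
    _ = M * (p * T.card) := by ring
end

section
/- Completeness of intersection extraction in JUS (step 13): With the setup and notation of the JUS aggregation identity — ζ, ω', π_D, γ' ∈ R[X]; for each C ∈ ι polynomials ω₁^C, ω₂^C, ρ₁^C, ρ₂^C, π_C, γ^C, δ^C, τ^C ∈ R[X] with Σ_{C∈ι} τ^C = 0; ν^C = (ζ·ω₁^C·ω₂^C·π_C + γ^C) + (ζ·ρ₁^C·ρ₂^C·π_D + δ^C) + τ^C; ν^D = ζ·ω'·π_D − Σ_{C∈ι}(γ^C + δ^C) + ζ·γ'; φ = ν^D + Σ_{C∈ι} ν^C — let φ' = φ − ζ·γ'. Then every common root of all input polynomials is a root of the unblinded result: if s ∈ R satisfies π_D.eval s = 0 and π_C.eval s = 0 for every C ∈ ι, then φ'.eval s = 0. -/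
/-- Completeness of intersection extraction in JUS (step 13): with the JUS
aggregate `φ = ν_D + ∑ ν C` (same setup as the aggregation identity, with
`∑ τ C = 0`) and `φ' = φ - ζ·γ'`, every common root `s` of the dealer's
polynomial `π_D` and of all the clients' polynomials `π C` satisfies
`φ'.eval s = 0`. -/
theorem jus_extraction_complete {R : Type*} [CommRing R] {ι : Type*} (t : Finset ι)
    (ζ ω' πD γ' : Polynomial R)
    (ω₁ ω₂ ρ₁ ρ₂ π γ δ τ : ι → Polynomial R)
    (hτ : ∑ C ∈ t, τ C = 0)
    (s : R) (hD : πD.eval s = 0) (hC : ∀ C ∈ t, (π C).eval s = 0) :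
    (((ζ * ω' * πD - ∑ C ∈ t, (γ C + δ C) + ζ * γ')
        + ∑ C ∈ t, ((ζ * ω₁ C * ω₂ C * π C + γ C)
            + (ζ * ρ₁ C * ρ₂ C * πD + δ C) + τ C))
      - ζ * γ').eval s = 0 := by
  -- The masks `γ C`, `δ C` cancel against the dealer's share and the `τ C` sum to zero.
  have key : ((ζ * ω' * πD - ∑ C ∈ t, (γ C + δ C) + ζ * γ')
        + ∑ C ∈ t, ((ζ * ω₁ C * ω₂ C * π C + γ C)
            + (ζ * ρ₁ C * ρ₂ C * πD + δ C) + τ C)) - ζ * γ'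
      = ζ * ω' * πD + ∑ C ∈ t, (ζ * ω₁ C * ω₂ C * π C + ζ * ρ₁ C * ρ₂ C * πD) := by
    simp only [Finset.sum_add_distrib, hτ]
    ring
  rw [key, Polynomial.eval_add, Polynomial.eval_mul, hD, mul_zero, zero_add,
    Polynomial.eval_finsetSum]
  refine Finset.sum_eq_zero fun C h => ?_
  simp [hD, hC C h]
end
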